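/- For the function g(t) = 2μ(1/√(t+1)) − log t on (0,∞), where μ(r) = (π/2)·K(1−r²)/K(r²) and K is the complete elliptic integral of the first kind (with parameter convention K(w) = ∫₀¹ dx/√((1−x²)(1−w x²))), the derivative satisfies g′(t) < 0 for all t > 0; that is, g is strictly decreasing on (0,∞). -/

import Mathlib

/-- Complete elliptic integral of the first kind,
`K(w) = ∫₀¹ dx / √((1 - x²)(1 - w x²))`. -/
noncomputable def ellK (w : ℝ) : ℝ :=
  ∫ x in (0:ℝ)..1, 1 / Real.sqrt ((1 - x ^ 2) * (1 - w * x ^ 2))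

/-- `μ(r) = (π/2) K(1 - r²) / K(r²)`. -/
noncomputable def muFn (r : ℝ) : ℝ :=
  (Real.pi / 2) * ellK (1 - r ^ 2) / ellK (r ^ 2)

/-- `g(t) = 2 μ(1/√(t+1)) - log t`. -/
noncomputable def gFn (t : ℝ) : ℝ :=
  2 * muFn (1 / Real.sqrt (t + 1)) - Real.log t

/-!
By Legendre's relation `E(w) K(1 - w) + E(1 - w) K(w) - K(w) K(1 - w) = π / 2`, the
quotient `K(1 - w) / K(w)` has derivative `-π / (4 w (1 - w) K(w)²)`, which yields the formula for
`μ'`. Substituting `r² = 1 / (t + 1)` gives `t g'(t) = (π / (2 K(1 / (t + 1))))² - 1`, and this is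
negative because `K(w) > K(0) = π / 2` for `0 < w < 1`.

Legendre's relation itself holds because its left-hand side has zero derivative on `(0, 1)` and
tends to `π / 2` at `0`; there `K(1 - w)` blows up, but no faster than `w ^ (-1 / 2)`, while
`K(w) - E(w) = O(w)`.
-/

open Real Set Filter Topology MeasureTheory Interval

theorem hasDerivAt_intervalIntegral_of_continuousOn {𝕜 E : Type*} [RCLike 𝕜]
    [NormedAddCommGroup E] [NormedSpace ℝ E] [NormedSpace 𝕜 E] {F F' : 𝕜 → ℝ → E} {U : Set 𝕜}
    {x : 𝕜} {a b : ℝ} (hU : U ∈ 𝓝 x) (hF : ∀ y ∈ U, ContinuousOn (F y) [[a, b]])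
    (hF' : ContinuousOn (Function.uncurry F') (U ×ˢ [[a, b]]))
    (hderiv : ∀ y ∈ U, ∀ t ∈ [[a, b]], HasDerivAt (F · t) (F' y t) y) :
    HasDerivAt (fun y => ∫ t in a..b, F y t) (∫ t in a..b, F' x t) x := by
  obtain ⟨s, hs, hsU, hs_compact⟩ := local_compact_nhds hU
  obtain ⟨C, hC⟩ := (hs_compact.prod isCompact_uIcc).exists_bound_of_continuousOn
    (hF'.mono (prod_mono_left hsU))
  have hF'x : ContinuousOn (F' x) [[a, b]] :=
    hF'.comp (f := fun t => (x, t)) (by fun_prop) fun t ht => ⟨mem_of_mem_nhds hU, ht⟩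
  refine (intervalIntegral.hasDerivAt_integral_of_dominated_loc_of_deriv_le
    (bound := fun _ => C) hs ?_ (hF x (mem_of_mem_nhds hU)).intervalIntegrable
    hF'x.intervalIntegrable.aestronglyMeasurable_restrict_uIoc ?_ intervalIntegrable_const ?_).2
  · filter_upwards [hU] with y hy
    exact (hF y hy).intervalIntegrable.aestronglyMeasurable_restrict_uIoc
  · exact .of_forall fun t ht y hy => hC (y, t) ⟨hy, uIoc_subset_uIcc ht⟩
  · exact .of_forall fun t ht y hy => hderiv y (hsU hy) t (uIoc_subset_uIcc ht)

/-- Legendre's `Δ(θ) = √(1 - w sin² θ)`, the integrand of the elliptic integrals in trigonometric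
form, with the parameter `w = k²` in place of the modulus `k`. -/
noncomputable def ellDelta (w θ : ℝ) : ℝ :=
  √(1 - w * sin θ ^ 2)

/-- The complete elliptic integral of the second kind, in trigonometric form and with the parameter
convention of `ellK`. -/
noncomputable def ellE (w : ℝ) : ℝ :=
  ∫ θ in 0..π / 2, ellDelta w θ

/-- The left-hand side of Legendre's relation. -/
noncomputable def legendreForm (w : ℝ) : ℝ :=
  ellE w * ellK (1 - w) + ellE (1 - w) * ellK w - ellK w * ellK (1 - w)

section Delta

variable {w : ℝ} (θ : ℝ)

theorem one_sub_mul_sin_sq_pos (hw : w < 1) : 0 < 1 - w * sin θ ^ 2 := by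
  rcases le_or_gt w 0 with hw₀ | hw₀
  · nlinarith [sq_nonneg (sin θ)]
  · nlinarith [sin_sq_le_one θ]

theorem ellDelta_pos (hw : w < 1) : 0 < ellDelta w θ :=
  sqrt_pos.2 (one_sub_mul_sin_sq_pos θ hw)

theorem ellDelta_sq (hw : w < 1) : ellDelta w θ ^ 2 = 1 - w * sin θ ^ 2 :=
  sq_sqrt (one_sub_mul_sin_sq_pos θ hw).le

theorem ellDelta_le_one (hw : 0 ≤ w) : ellDelta w θ ≤ 1 :=
  sqrt_le_one.2 (sub_le_self 1 (by positivity))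

theorem sqrt_one_sub_le_ellDelta (hw : 0 ≤ w) : √(1 - w) ≤ ellDelta w θ :=
  sqrt_le_sqrt (sub_le_sub_left (mul_le_of_le_one_right hw (sin_sq_le_one θ)) 1)

theorem continuous_uncurry_ellDelta : Continuous (Function.uncurry ellDelta) := by
  unfold Function.uncurry ellDelta
  fun_prop

theorem continuous_ellDelta (w : ℝ) : Continuous (ellDelta w) := by
  unfold ellDelta
  fun_prop

theorem continuous_inv_ellDelta (hw : w < 1) : Continuous fun θ => (ellDelta w θ)⁻¹ :=
  (continuous_ellDelta w).inv₀ fun θ => (ellDelta_pos θ hw).ne'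

theorem hasDerivAt_ellDelta_param (hw : w < 1) :
    HasDerivAt (ellDelta · θ) (-(sin θ ^ 2 / (2 * ellDelta w θ))) w := by
  have h := (((hasDerivAt_id w).mul_const (sin θ ^ 2)).const_sub 1).sqrt
    (one_sub_mul_sin_sq_pos θ hw).ne'
  exact h.congr_deriv (by simp [ellDelta, neg_div])

theorem hasDerivAt_ellDelta (hw : w < 1) :
    HasDerivAt (ellDelta w) (-(w * sin θ * cos θ / ellDelta w θ)) θ := by
  have h := ((((hasDerivAt_sin θ).pow 2).const_mul w).const_sub 1).sqrt
    (one_sub_mul_sin_sq_pos θ hw).ne'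
  refine h.congr_deriv ?_
  have hΔ := (ellDelta_pos θ hw).ne'
  change _ / (2 * ellDelta w θ) = _
  push_cast
  field_simp

-- This antiderivative vanishes at both `0` and `π / 2`, so it trades `∫ Δ⁻³` for `∫ Δ`.
theorem hasDerivAt_mul_sin_mul_cos_div_ellDelta (hw : w < 1) :
    HasDerivAt (fun θ => w * (sin θ * cos θ / ellDelta w θ))
      (ellDelta w θ - (1 - w) * (ellDelta w θ)⁻¹ ^ 3) θ := by
  have hΔ := (ellDelta_pos θ hw).ne'
  refine ((((hasDerivAt_sin θ).mul (hasDerivAt_cos θ)).div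
    (hasDerivAt_ellDelta θ hw) hΔ).const_mul w).congr_deriv ?_
  have hΔ_sq := ellDelta_sq θ hw
  have hΔ_four : ellDelta w θ ^ 4 = (1 - w * sin θ ^ 2) ^ 2 := by rw [← hΔ_sq]; ring
  simp only [Pi.mul_apply]
  field_simp
  rw [hΔ_four, hΔ_sq, cos_sq']
  ring

end Delta

section EllipticIntegrals

variable {w : ℝ}

theorem ellK_eq_integral_inv_ellDelta (w : ℝ) : ellK w = ∫ θ in 0..π / 2, (ellDelta w θ)⁻¹ := by
  have hcos : ∀ θ ∈ Ioo 0 (π / 2), 0 < cos θ := fun θ hθ =>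
    cos_pos_of_mem_Ioo ⟨by linarith [hθ.1, pi_pos], hθ.2⟩
  have hsubst := intervalIntegral.integral_comp_mul_deriv_of_deriv_nonneg
    (g := fun x => 1 / √((1 - x ^ 2) * (1 - w * x ^ 2))) (a := 0) (b := π / 2)
    continuousOn_sin (fun θ _ => hasDerivAt_sin θ) fun θ hθ => by
      rw [min_eq_left pi_div_two_pos.le, max_eq_right pi_div_two_pos.le] at hθ
      exact (hcos θ hθ).le
  rw [sin_zero, sin_pi_div_two] at hsubst
  rw [ellK, ← hsubst]
  refine intervalIntegral.integral_congr_Ioo_of_le pi_div_two_pos.le fun θ hθ => ?_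
  have hc := hcos θ hθ
  simp only [Function.comp_apply, ellDelta]
  rw [← cos_sq', sqrt_mul (sq_nonneg _), sqrt_sq hc.le]
  field_simp

theorem intervalIntegrable_ellDelta (w : ℝ) :
    IntervalIntegrable (ellDelta w) volume 0 (π / 2) :=
  (continuous_ellDelta w).intervalIntegrable _ _

theorem intervalIntegrable_inv_ellDelta (hw : w < 1) :
    IntervalIntegrable (fun θ => (ellDelta w θ)⁻¹) volume 0 (π / 2) :=
  (continuous_inv_ellDelta hw).intervalIntegrable _ _

theorem intervalIntegrable_inv_ellDelta_pow_three (hw : w < 1) :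
    IntervalIntegrable (fun θ => (ellDelta w θ)⁻¹ ^ 3) volume 0 (π / 2) :=
  ((continuous_inv_ellDelta hw).pow 3).intervalIntegrable _ _

theorem ellK_zero : ellK 0 = π / 2 := by
  simp [ellK_eq_integral_inv_ellDelta, ellDelta]

theorem ellE_one : ellE 1 = 1 := by
  have hcos : ∀ θ ∈ [[0, π / 2]], ellDelta 1 θ = cos θ := fun θ hθ => by
    rw [uIcc_of_le pi_div_two_pos.le] at hθ
    rw [ellDelta, one_mul, ← cos_sq',
      sqrt_sq (cos_nonneg_of_mem_Icc ⟨by linarith [hθ.1, pi_pos], hθ.2⟩)]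
  rw [ellE, intervalIntegral.integral_congr hcos]
  simp

theorem continuous_ellE : Continuous ellE :=
  intervalIntegral.continuous_parametric_intervalIntegral_of_continuous'
    continuous_uncurry_ellDelta 0 (π / 2)

theorem ellE_le_ellK (hw₀ : 0 ≤ w) (hw₁ : w < 1) : ellE w ≤ ellK w := by
  rw [ellK_eq_integral_inv_ellDelta]
  refine intervalIntegral.integral_mono_on pi_div_two_pos.le (intervalIntegrable_ellDelta w)
    (intervalIntegrable_inv_ellDelta hw₁) fun θ _ => ?_
  have hΔ := ellDelta_le_one θ hw₀
  exact hΔ.trans ((one_le_inv₀ (ellDelta_pos θ hw₁)).2 hΔ)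

theorem one_sub_mul_ellK_le_ellE (hw₀ : 0 ≤ w) (hw₁ : w < 1) : (1 - w) * ellK w ≤ ellE w := by
  rw [ellK_eq_integral_inv_ellDelta, ← intervalIntegral.integral_const_mul]
  refine intervalIntegral.integral_mono_on pi_div_two_pos.le
    ((intervalIntegrable_inv_ellDelta hw₁).const_mul _) (intervalIntegrable_ellDelta w)
    fun θ _ => ?_
  rw [← div_eq_mul_inv, div_le_iff₀ (ellDelta_pos θ hw₁), ← sq, ellDelta_sq θ hw₁]
  exact sub_le_sub_left (mul_le_of_le_one_right hw₀ (sin_sq_le_one θ)) 1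

theorem ellK_le_pi_div_two_div_sqrt (hw₀ : 0 ≤ w) (hw₁ : w < 1) :
    ellK w ≤ π / 2 / √(1 - w) := by
  have hconst : ∫ _ in 0..π / 2, (√(1 - w))⁻¹ = π / 2 / √(1 - w) := by
    simp [div_eq_mul_inv]
  rw [ellK_eq_integral_inv_ellDelta, ← hconst]
  exact intervalIntegral.integral_mono_on pi_div_two_pos.le (intervalIntegrable_inv_ellDelta hw₁)
    intervalIntegrable_const fun θ _ =>
      inv_anti₀ (sqrt_pos.2 (sub_pos.2 hw₁)) (sqrt_one_sub_le_ellDelta θ hw₀)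

end EllipticIntegrals

section Derivatives

variable {w : ℝ}

theorem hasDerivAt_ellE (hw₀ : w ≠ 0) (hw₁ : w < 1) :
    HasDerivAt ellE ((ellE w - ellK w) / (2 * w)) w := by
  have hparam := hasDerivAt_intervalIntegral_of_continuousOn (a := 0) (b := π / 2)
    (Iio_mem_nhds hw₁) (fun v _ => (continuous_ellDelta v).continuousOn)
    (F' := fun v θ => -(sin θ ^ 2 / (2 * ellDelta v θ)))
    (ContinuousOn.neg <| ContinuousOn.div (by fun_prop)
      (continuous_uncurry_ellDelta.continuousOn.const_mul 2)
      fun p hp => mul_ne_zero two_ne_zero (ellDelta_pos p.2 hp.1).ne')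
    fun v hv θ _ => hasDerivAt_ellDelta_param θ hv
  refine hparam.congr_deriv ?_
  rw [ellE, ellK_eq_integral_inv_ellDelta, ← intervalIntegral.integral_sub
    (intervalIntegrable_ellDelta w) (intervalIntegrable_inv_ellDelta hw₁),
    ← intervalIntegral.integral_div]
  refine intervalIntegral.integral_congr fun θ _ => ?_
  have hΔ := (ellDelta_pos θ hw₁).ne'
  have hΔ_sq := ellDelta_sq θ hw₁
  field_simp
  linear_combination -hΔ_sq

theorem hasDerivAt_ellK_integral (hw : w < 1) :
    HasDerivAt ellK (∫ θ in 0..π / 2, sin θ ^ 2 / 2 * (ellDelta w θ)⁻¹ ^ 3) w := by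
  rw [funext ellK_eq_integral_inv_ellDelta]
  refine hasDerivAt_intervalIntegral_of_continuousOn (Iio_mem_nhds hw)
    (fun v hv => (continuous_inv_ellDelta hv).continuousOn)
    (F' := fun v θ => sin θ ^ 2 / 2 * (ellDelta v θ)⁻¹ ^ 3)
    (ContinuousOn.mul (by fun_prop) <| (continuous_uncurry_ellDelta.continuousOn.inv₀
      fun p hp => (ellDelta_pos p.2 hp.1).ne').pow 3) fun v hv θ _ => ?_
  have hΔ := (ellDelta_pos θ hv).ne'
  refine ((hasDerivAt_ellDelta_param θ hv).inv hΔ).congr_deriv ?_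
  field_simp

theorem integral_inv_ellDelta_pow_three (hw : w < 1) :
    ∫ θ in 0..π / 2, (ellDelta w θ)⁻¹ ^ 3 = ellE w / (1 - w) := by
  have hcube := intervalIntegrable_inv_ellDelta_pow_three hw
  have hftc := intervalIntegral.integral_eq_sub_of_hasDerivAt
    (fun θ _ => hasDerivAt_mul_sin_mul_cos_div_ellDelta θ hw)
    ((intervalIntegrable_ellDelta w).sub (hcube.const_mul (1 - w)))
  rw [intervalIntegral.integral_sub (intervalIntegrable_ellDelta w) (hcube.const_mul _),
    intervalIntegral.integral_const_mul, ← ellE, cos_pi_div_two, sin_zero] at hftc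
  rw [eq_div_iff (sub_pos.2 hw).ne']
  linear_combination -hftc

theorem hasDerivAt_ellK (hw₀ : w ≠ 0) (hw₁ : w < 1) :
    HasDerivAt ellK ((ellE w / (1 - w) - ellK w) / (2 * w)) w := by
  refine (hasDerivAt_ellK_integral hw₁).congr_deriv ?_
  have hcube := intervalIntegrable_inv_ellDelta_pow_three hw₁
  rw [← integral_inv_ellDelta_pow_three hw₁, ellK_eq_integral_inv_ellDelta,
    ← intervalIntegral.integral_sub hcube (intervalIntegrable_inv_ellDelta hw₁),
    ← intervalIntegral.integral_div]
  refine intervalIntegral.integral_congr fun θ _ => ?_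
  have hΔ := (ellDelta_pos θ hw₁).ne'
  have hΔ_sq := ellDelta_sq θ hw₁
  field_simp
  linear_combination hΔ_sq

theorem strictMonoOn_ellK : StrictMonoOn ellK (Iio 1) := by
  refine strictMonoOn_of_deriv_pos (convex_Iio 1)
    (fun w hw => (hasDerivAt_ellK_integral hw).continuousAt.continuousWithinAt) fun w hw => ?_
  rw [interior_Iio] at hw
  rw [(hasDerivAt_ellK_integral hw).deriv]
  refine intervalIntegral.intervalIntegral_pos_of_pos_on
    (Continuous.intervalIntegrable (.mul (by fun_prop) ((continuous_inv_ellDelta hw).pow 3)) _ _)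
    (fun θ hθ => ?_) pi_div_two_pos
  have hsin : 0 < sin θ := sin_pos_of_pos_of_lt_pi hθ.1 (by linarith [hθ.2, pi_pos])
  have hΔ := ellDelta_pos θ hw
  positivity

theorem pi_div_two_lt_ellK (hw : w ∈ Ioo 0 1) : π / 2 < ellK w :=
  ellK_zero ▸ strictMonoOn_ellK (mem_Iio.2 one_pos) hw.2 hw.1

theorem ellK_pos (hw : w ∈ Ioo 0 1) : 0 < ellK w :=
  pi_div_two_pos.trans (pi_div_two_lt_ellK hw)

end Derivatives

section Legendre

variable {w : ℝ}

theorem hasDerivAt_legendreForm (hw : w ∈ Ioo 0 1) : HasDerivAt legendreForm 0 w := by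
  have hw' : 1 - w ∈ Ioo 0 1 := Ioo.one_sub_mem hw
  have hK := hasDerivAt_ellK hw.1.ne' hw.2
  have hE := hasDerivAt_ellE hw.1.ne' hw.2
  have hK' := (hasDerivAt_ellK hw'.1.ne' hw'.2).comp_const_sub 1 w
  have hE' := (hasDerivAt_ellE hw'.1.ne' hw'.2).comp_const_sub 1 w
  refine (((hE.mul hK').add (hE'.mul hK)).sub (hK.mul hK')).congr_deriv ?_
  have hw₀ := hw.1.ne'
  have hw₁ := hw'.1.ne'
  rw [sub_sub_cancel]
  field_simp
  ring

theorem ellK_sub_ellE_mul_ellK_one_sub_le (hw : w ∈ Ioo 0 1) :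
    (ellK w - ellE w) * ellK (1 - w) ≤ π / 2 * (√w * ellK w) := by
  have hw' : 1 - w ∈ Ioo 0 1 := Ioo.one_sub_mem hw
  have hdiff : ellK w - ellE w ≤ w * ellK w := by
    linarith [one_sub_mul_ellK_le_ellE hw.1.le hw.2]
  have hbound : ellK (1 - w) ≤ π / 2 / √w := by
    simpa using ellK_le_pi_div_two_div_sqrt hw'.1.le hw'.2
  calc (ellK w - ellE w) * ellK (1 - w)
      ≤ w * ellK w * (π / 2 / √w) :=
        mul_le_mul hdiff hbound (ellK_pos hw').le (mul_nonneg hw.1.le (ellK_pos hw).le)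
    _ = π / 2 * (w / √w * ellK w) := by ring
    _ = π / 2 * (√w * ellK w) := by rw [div_sqrt]

theorem tendsto_legendreForm_zero : Tendsto legendreForm (𝓝[>] 0) (𝓝 (π / 2)) := by
  have hK : Tendsto ellK (𝓝[>] 0) (𝓝 (π / 2)) := by
    have h := (hasDerivAt_ellK_integral zero_lt_one).continuousAt.tendsto
    rw [ellK_zero] at h
    exact h.mono_left nhdsWithin_le_nhds
  have hE' : Tendsto (fun w => ellE (1 - w)) (𝓝[>] 0) (𝓝 1) := by
    have h := (continuous_ellE.comp (continuous_sub_left (1 : ℝ))).tendsto 0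
    simp only [Function.comp_apply, sub_zero, ellE_one] at h
    exact h.mono_left nhdsWithin_le_nhds
  have hsqrt : Tendsto sqrt (𝓝[>] 0) (𝓝 0) := by
    simpa using (continuous_sqrt.tendsto 0).mono_left nhdsWithin_le_nhds
  have hremainder : Tendsto (fun w => (ellK w - ellE w) * ellK (1 - w)) (𝓝[>] 0) (𝓝 0) := by
    have hbound : Tendsto (fun w => π / 2 * (√w * ellK w)) (𝓝[>] 0) (𝓝 0) := by
      simpa using (hsqrt.mul hK).const_mul (π / 2)
    have hIoo : Ioo (0 : ℝ) 1 ∈ 𝓝[>] 0 := Ioo_mem_nhdsGT zero_lt_one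
    refine squeeze_zero' ?_ ?_ hbound
    · filter_upwards [hIoo] with w hw
      exact mul_nonneg (sub_nonneg.2 (ellE_le_ellK hw.1.le hw.2))
        (ellK_pos (Ioo.one_sub_mem hw)).le
    · filter_upwards [hIoo] with w hw using ellK_sub_ellE_mul_ellK_one_sub_le hw
  convert (hE'.mul hK).sub hremainder using 2
  · rw [legendreForm]
    ring
  · ring

theorem legendreForm_eq_pi_div_two (hw : w ∈ Ioo 0 1) : legendreForm w = π / 2 := by
  have hconst : ∀ v ∈ Ioo (0 : ℝ) 1, legendreForm w = legendreForm v := fun v hv =>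
    isOpen_Ioo.is_const_of_deriv_eq_zero isPreconnected_Ioo
      (fun x hx => (hasDerivAt_legendreForm hx).differentiableAt.differentiableWithinAt)
      (fun x hx => (hasDerivAt_legendreForm hx).deriv) hw hv
  refine tendsto_nhds_unique (tendsto_const_nhds.congr' ?_) tendsto_legendreForm_zero
  filter_upwards [Ioo_mem_nhdsGT zero_lt_one] with v hv using hconst v hv

end Legendre

theorem hasDerivAt_ellK_one_sub_div_ellK {w : ℝ} (hw : w ∈ Ioo 0 1) :
    HasDerivAt (fun w => ellK (1 - w) / ellK w) (-(π / (4 * w * (1 - w) * ellK w ^ 2))) w := by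
  have hw' : 1 - w ∈ Ioo 0 1 := Ioo.one_sub_mem hw
  have hK := (ellK_pos hw).ne'
  refine (((hasDerivAt_ellK hw'.1.ne' hw'.2).comp_const_sub 1 w).div
    (hasDerivAt_ellK hw.1.ne' hw.2) hK).congr_deriv ?_
  have hw₀ := hw.1.ne'
  have hw₁ := hw'.1.ne'
  have hlegendre := legendreForm_eq_pi_div_two hw
  rw [legendreForm] at hlegendre
  rw [sub_sub_cancel]
  field_simp
  linear_combination (-4) * hlegendre

theorem hasDerivAt_muFn {r : ℝ} (hr : r ∈ Ioo 0 1) :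
    HasDerivAt muFn (-(π ^ 2 / (4 * r * (1 - r ^ 2) * ellK (r ^ 2) ^ 2))) r := by
  have hr_sq : r ^ 2 ∈ Ioo 0 1 := ⟨pow_pos hr.1 2, pow_lt_one₀ hr.1.le hr.2 two_ne_zero⟩
  have h := (HasDerivAt.comp (h := fun r => r ^ 2) r (hasDerivAt_ellK_one_sub_div_ellK hr_sq)
    (hasDerivAt_pow 2 r)).const_mul (π / 2)
  have hmu : muFn = fun r => π / 2 * (ellK (1 - r ^ 2) / ellK (r ^ 2)) :=
    funext fun r => mul_div_assoc _ _ _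
  rw [hmu]
  refine h.congr_deriv ?_
  have hr₀ := hr.1.ne'
  field_simp
  norm_num

theorem hasDerivAt_one_div_sqrt_add_one {t : ℝ} (ht : -1 < t) :
    HasDerivAt (fun t => 1 / √(t + 1)) (-((1 / √(t + 1)) ^ 3 / 2)) t := by
  have hpos : 0 < t + 1 := by linarith
  have hs := (sqrt_pos.2 hpos).ne'
  have h := (((hasDerivAt_id t).add_const 1).sqrt hpos.ne').inv hs
  simp only [one_div]
  refine h.congr_deriv ?_
  simp only [id]
  field_simp

theorem hasDerivAt_gFn {t : ℝ} (ht : 0 < t) :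
    HasDerivAt gFn (((π / 2 / ellK (1 / (t + 1))) ^ 2 - 1) / t) t := by
  have hs : 1 < √(t + 1) := by
    rw [lt_sqrt zero_le_one]
    linarith
  have hr : 1 / √(t + 1) ∈ Ioo 0 1 := ⟨by positivity, (div_lt_one (by positivity)).2 hs⟩
  have hr_sq : (1 / √(t + 1)) ^ 2 = 1 / (t + 1) := by
    rw [div_pow, one_pow, sq_sqrt (by positivity)]
  have h := (((hasDerivAt_muFn hr).comp t (hasDerivAt_one_div_sqrt_add_one
    (by linarith))).const_mul 2).sub (hasDerivAt_log ht.ne')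
  refine h.congr_deriv ?_
  have hsub : 1 - 1 / (t + 1) = t / (t + 1) := by field_simp; ring
  rw [pow_succ (1 / √(t + 1)) 2, hr_sq, hsub]
  field_simp
  ring

theorem deriv_gFn_neg {t : ℝ} (ht : 0 < t) : deriv gFn t < 0 := by
  have hw : 1 / (t + 1) ∈ Ioo 0 1 := ⟨by positivity, (div_lt_one (by positivity)).2 (by linarith)⟩
  have hratio_nonneg : 0 ≤ π / 2 / ellK (1 / (t + 1)) :=
    div_nonneg pi_div_two_pos.le (ellK_pos hw).le
  have hratio_lt_one : π / 2 / ellK (1 / (t + 1)) < 1 :=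
    (div_lt_one (ellK_pos hw)).2 (pi_div_two_lt_ellK hw)
  rw [(hasDerivAt_gFn ht).deriv]
  exact div_neg_of_neg_of_pos
    (sub_neg.2 (pow_lt_one₀ hratio_nonneg hratio_lt_one two_ne_zero)) ht

theorem stmt_0 :
    (∀ t : ℝ, 0 < t → deriv gFn t < 0) ∧ StrictAntiOn gFn (Set.Ioi 0) := by
  refine ⟨fun t ht => deriv_gFn_neg ht, strictAntiOn_of_deriv_neg (convex_Ioi 0)
    (fun t ht => (hasDerivAt_gFn ht).continuousAt.continuousWithinAt) fun t ht => ?_⟩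
  rw [interior_Ioi] at ht
  exact deriv_gFn_neg ht
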